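/- arXiv:2002.04134 — 2 statements merged into one kernel-verified Lean document; each statement's English description precedes it below -/
import Mathlib

section
/- In ℤ[x,y], let R(x,y) denote the resultant with respect to z of the two polynomials (z²+12z+16)³ + x·(z+11) and (z²−228z+496)³ + y·(z+11)⁵, each regarded as a polynomial in z (of degree 6) with coefficients in ℤ[x,y]. Then R(x,y) = R(y,x). -/
open Polynomial

/-- The Sylvester matrix of two polynomials `f`, `g`, regarded as having degrees (at most)
`m` and `n` respectively: an `(n+m) × (n+m)` matrix whose first `n` rows carry the shifted
coefficient sequences of `f` and whose last `m` rows carry those of `g`. -/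
noncomputable def sylvesterMat {R : Type*} [CommRing R] (m n : ℕ) (f g : Polynomial R) :
    Matrix (Fin (n + m)) (Fin (n + m)) R := fun i j =>
  if (i : ℕ) < n then
    (if (i : ℕ) ≤ (j : ℕ) then f.coeff ((j : ℕ) - (i : ℕ)) else 0)
  else
    (if (i : ℕ) - n ≤ (j : ℕ) then g.coeff ((j : ℕ) - ((i : ℕ) - n)) else 0)

/-- The resultant of `f` and `g`, regarded as polynomials of degrees `m` and `n`:
the determinant of their Sylvester matrix. -/
noncomputable def resultantD {R : Type*} [CommRing R] (m n : ℕ) (f g : Polynomial R) : R :=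
  (sylvesterMat m n f g).det

/-- `R(x,y) = Res_z((z²+12z+16)³ + x(z+11), (z²−228z+496)³ + y(z+11)⁵)`, the resultant
being taken of two polynomials of degree 6 in `z` with coefficients in the ring `A`
containing `x` and `y`. -/
noncomputable def Rres {A : Type*} [CommRing A] (x y : A) : A :=
  resultantD 6 6
    ((X ^ 2 + 12 * X + 16) ^ 3 + C x * (X + 11))
    ((X ^ 2 - 228 * X + 496) ^ 3 + C y * (X + 11) ^ 5)

/- The two polynomials, `F_x` and `G_y`, cut out the fibres `j(τ) = x` and `j(5τ) = y` on the
modular curve `X₀(5)`, whose Hauptmodul `125 (η(5τ) / η(τ))⁶` is `-(z + 11)`. The Fricke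
involution `τ ↦ -1 / (5τ)`, that is `w : z + 11 ↦ 125 / (z + 11)`, exchanges the two fibrations,
so `125⁶ R(x, y) = Res(F_x, w^* F_y)`. Over a ring where `F_x` has roots `u` and `F_y` has roots
`v`, the right-hand side is `∏ (125 - (u + 11) * (v + 11))`, which does not change when `x` and `y`
are swapped. In `ℤ[x, y]` the factor `125⁶` can be cancelled. -/

section Resultant

variable {R : Type*} [CommRing R]

theorem sylvesterMat_eq_transpose_sylvester {m n : ℕ} {f g : R[X]} (hf : f.natDegree ≤ m)
    (hg : g.natDegree ≤ n) : sylvesterMat m n f g = (sylvester g f n m).transpose := by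
  have coeff_eq_ite {p : R[X]} {d : ℕ} (hp : p.natDegree ≤ d) (k j : ℕ) :
      (if k ≤ j then p.coeff (j - k) else 0) =
        if j ∈ Set.Icc k (k + d) then p.coeff (j - k) else 0 := by
    by_cases hj : j ≤ k + d
    · simp [hj]
    · rw [coeff_eq_zero_of_natDegree_lt (by lia : p.natDegree < j - k), ite_self, ite_self]
  ext i j
  induction i using Fin.addCases with
  | left i => simpa [sylvesterMat, sylvester] using coeff_eq_ite hf i j
  | right i => simpa [sylvesterMat, sylvester] using coeff_eq_ite hg i j

theorem resultantD_eq_resultant {m n : ℕ} {f g : R[X]} (hf : f.natDegree ≤ m)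
    (hg : g.natDegree ≤ n) : resultantD m n f g = resultant g f n m := by
  rw [resultantD, sylvesterMat_eq_transpose_sylvester hf hg, Matrix.det_transpose, resultant]

theorem resultant_multiset_prod_X_sub_C_left (s : Multiset R) {g : R[X]} {n : ℕ}
    (hg : g.natDegree ≤ n) :
    resultant (s.map (X - C ·)).prod g s.card n = (s.map g.eval).prod := by
  nontriviality R
  induction s using Multiset.induction with
  | empty => simp
  | cons a s ih =>
    have h := resultant_mul_left (X - C a) (s.map (X - C ·)).prod g n hg
    rw [natDegree_multiset_prod_X_sub_C_eq_card, natDegree_X_sub_C, ih,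
      resultant_X_sub_C_left _ _ _ hg] at h
    rw [Multiset.map_cons, Multiset.prod_cons, Multiset.card_cons, add_comm, h,
      Multiset.map_cons, Multiset.prod_cons]

end Resultant

section Splitting

theorem splits_iff_exists_eq_multiset_prod_X_sub_C_of_monic {R : Type*} [CommRing R] {f : R[X]}
    (hf : f.Monic) : f.Splits ↔ ∃ s : Multiset R, f = (s.map (X - C ·)).prod := by
  rw [splits_iff_exists_multiset, hf.leadingCoeff, C_1]
  simp only [one_mul]

theorem exists_injective_splits_map_splits_map.{u} {R : Type u} [CommRing R] [Nontrivial R]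
    {f g : R[X]} (hf : f.Monic) (hg : g.Monic) :
    ∃ (S : Type u) (_ : CommRing S) (φ : R →+* S),
      Function.Injective φ ∧ (f.map φ).Splits ∧ (g.map φ).Splits := by
  obtain ⟨S, _, _, _, _, _, hfS⟩ := hf.exists_splits_map
  obtain ⟨T, _, _, _, _, _, hgT⟩ := (hg.map (algebraMap R S)).exists_splits_map
  refine ⟨T, inferInstance, (algebraMap S T).comp (algebraMap R S), ?_, ?_, ?_⟩
  · exact (FaithfulSMul.algebraMap_injective S T).comp (FaithfulSMul.algebraMap_injective R S)
  · rw [← Polynomial.map_map]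
    exact hfS.map _
  · rwa [← Polynomial.map_map]

end Splitting

section InvolutionPullback

variable {R : Type*} [CommRing R] (a b c : R)

/-- The pullback of `f`, as a form of degree `n`, along the Möbius involution
`z ↦ (a z + b) / (c z - a)`: this is `(c z - a) ^ n * f ((a z + b) / (c z - a))`, with the
denominators cleared by homogenizing. -/
noncomputable def involutionPullback (n : ℕ) (f : R[X]) : R[X] :=
  MvPolynomial.aeval ![C a * X + C b, C c * X - C a] (f.homogenize n)

theorem map_involutionPullback {S : Type*} [CommRing S] (φ : R →+* S) (n : ℕ) (f : R[X]) :
    (involutionPullback a b c n f).map φ =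
      involutionPullback (φ a) (φ b) (φ c) n (f.map φ) := by
  rw [involutionPullback, involutionPullback, homogenize_map, ← coe_mapRingHom,
    MvPolynomial.map_aeval, MvPolynomial.coe_eval₂Hom, MvPolynomial.aeval_def,
    MvPolynomial.eval₂_map]
  congr 1
  · ext; simp
  · funext i; fin_cases i <;> simp

theorem involutionPullback_multiset_prod_X_sub_C (s : Multiset R) :
    involutionPullback a b c s.card (s.map (X - C ·)).prod =
      (s.map fun r ↦ C a * X + C b - C r * (C c * X - C a)).prod := by
  nontriviality R
  induction s using Multiset.induction with
  | empty => simp [involutionPullback]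
  | cons r s ih =>
    have hdeg := (natDegree_multiset_prod_X_sub_C_eq_card s).le
    rw [involutionPullback] at ih ⊢
    rw [Multiset.map_cons, Multiset.prod_cons, Multiset.card_cons, Nat.add_comm,
      homogenize_mul _ _ (natDegree_X_sub_C_le r) hdeg, map_mul, ih, Multiset.map_cons,
      Multiset.prod_cons]
    simp

theorem resultant_involutionPullback_multiset_prod_X_sub_C (s t : Multiset R) :
    resultant (s.map (X - C ·)).prod
        (involutionPullback a b c t.card (t.map (X - C ·)).prod) s.card t.card =
      (s.map fun u ↦ (t.map fun v ↦ b + a * (u + v) - c * (u * v)).prod).prod := by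
  have hdeg : (t.map fun v ↦ C a * X + C b - C v * (C c * X - C a)).prod.natDegree ≤ t.card := by
    refine (natDegree_multiset_prod_le _).trans ?_
    rw [Multiset.map_map]
    refine (Multiset.sum_le_card_nsmul _ 1 fun d hd ↦ ?_).trans_eq (by simp)
    obtain ⟨v, -, rfl⟩ := Multiset.mem_map.mp hd
    simp only [Function.comp_apply]
    compute_degree
  rw [involutionPullback_multiset_prod_X_sub_C, resultant_multiset_prod_X_sub_C_left s hdeg]
  simp only [eval_multiset_prod, Multiset.map_map, Function.comp_def]
  congr! 6
  simp only [eval_add, eval_sub, eval_mul, eval_C, eval_X]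
  ring

theorem resultant_involutionPullback_comm {f g : R[X]} (hf : f.Monic) (hg : g.Monic) :
    resultant f (involutionPullback a b c g.natDegree g) f.natDegree g.natDegree =
      resultant g (involutionPullback a b c f.natDegree f) g.natDegree f.natDegree := by
  nontriviality R
  obtain ⟨S, _, φ, hφ, hfS, hgS⟩ := exists_injective_splits_map_splits_map hf hg
  have := hφ.nontrivial
  obtain ⟨s, hs⟩ := (splits_iff_exists_eq_multiset_prod_X_sub_C_of_monic (hf.map φ)).mp hfS
  obtain ⟨t, ht⟩ := (splits_iff_exists_eq_multiset_prod_X_sub_C_of_monic (hg.map φ)).mp hgS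
  have hs_card : f.natDegree = s.card := by
    rw [← hf.natDegree_map φ, hs, natDegree_multiset_prod_X_sub_C_eq_card]
  have ht_card : g.natDegree = t.card := by
    rw [← hg.natDegree_map φ, ht, natDegree_multiset_prod_X_sub_C_eq_card]
  apply hφ
  rw [← resultant_map_map, ← resultant_map_map, map_involutionPullback, map_involutionPullback,
    hs, ht, hs_card, ht_card, resultant_involutionPullback_multiset_prod_X_sub_C,
    resultant_involutionPullback_multiset_prod_X_sub_C, Multiset.prod_map_prod_map]
  simp only [add_comm, mul_comm]

end InvolutionPullback

section LevelFive

variable {A : Type*} [CommRing A]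

/-- The polynomial `F_x` whose roots are the points of `X₀(5)` with `j(τ) = x`. -/
noncomputable def fiberPoly (x : A) : A[X] :=
  (X ^ 2 + 12 * X + 16) ^ 3 + C x * (X + 11)

/-- The polynomial `G_y` whose roots are the points of `X₀(5)` with `j(5τ) = y`. -/
noncomputable def frickeFiberPoly (y : A) : A[X] :=
  (X ^ 2 - 228 * X + 496) ^ 3 + C y * (X + 11) ^ 5

theorem natDegree_fiberPoly [Nontrivial A] (x : A) : (fiberPoly x).natDegree = 6 := by
  unfold fiberPoly
  compute_degree!

theorem monic_fiberPoly (x : A) : (fiberPoly x).Monic := by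
  nontriviality A
  rw [Monic, leadingCoeff, natDegree_fiberPoly]
  unfold fiberPoly
  compute_degree!

theorem natDegree_frickeFiberPoly_le (y : A) : (frickeFiberPoly y).natDegree ≤ 6 := by
  unfold frickeFiberPoly
  compute_degree

theorem homogenize_fiberPoly (x : A) :
    (fiberPoly x).homogenize 6 =
      (.X 0 ^ 2 + 12 * .X 0 * .X 1 + 16 * .X 1 ^ 2) ^ 3 +
        .C x * (.X 0 + 11 * .X 1) * .X 1 ^ 5 := by
  have hX (i : Fin 2) := MvPolynomial.isHomogeneous_X A i
  have hC (a : A) := MvPolynomial.isHomogeneous_C (Fin 2) a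
  apply homogenize_eq_of_isHomogeneous
  · have hquad := (((hX 0).pow 2).add (((hC 12).mul (hX 0)).mul (hX 1))).add
      ((hC 16).mul ((hX 1).pow 2))
    have hlin := (hX 0).add ((hC 11).mul (hX 1))
    exact (hquad.pow 3).add (((hC x).mul hlin).mul ((hX 1).pow 5))
  · simp only [fiberPoly, map_add, map_mul, map_pow, map_ofNat, MvPolynomial.aeval_X,
      MvPolynomial.aeval_C, algebraMap_eq, Matrix.cons_val, one_pow, mul_one]

theorem map_fiberPoly {B : Type*} [CommRing B] (φ : A →+* B) (x : A) :
    (fiberPoly x).map φ = fiberPoly (φ x) := by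
  simp [fiberPoly]

theorem map_frickeFiberPoly {B : Type*} [CommRing B] (φ : A →+* B) (y : A) :
    (frickeFiberPoly y).map φ = frickeFiberPoly (φ y) := by
  simp [frickeFiberPoly]

/-- `z ↦ (4 - 11 * z) / (z + 11)` is the Fricke involution `z + 11 ↦ 125 / (z + 11)`. -/
theorem involutionPullback_fiberPoly (x : A) :
    involutionPullback (-11) 4 1 6 (fiberPoly x) = C 125 * frickeFiberPoly x := by
  rw [involutionPullback, homogenize_fiberPoly]
  simp only [frickeFiberPoly, map_add, map_mul, map_pow, map_neg, map_one, map_ofNat,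
    MvPolynomial.aeval_X, MvPolynomial.aeval_C, algebraMap_eq, Matrix.cons_val]
  ring

theorem Rres_eq_resultant (x y : A) :
    Rres x y = resultant (fiberPoly x) (frickeFiberPoly y) 6 6 := by
  nontriviality A
  rw [resultant_comm, Even.neg_one_pow (by decide), one_mul]
  exact resultantD_eq_resultant (natDegree_fiberPoly x).le (natDegree_frickeFiberPoly_le y)

theorem map_Rres {B : Type*} [CommRing B] (φ : A →+* B) (x y : A) :
    φ (Rres x y) = Rres (φ x) (φ y) := by
  rw [Rres_eq_resultant, Rres_eq_resultant, ← resultant_map_map, map_fiberPoly,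
    map_frickeFiberPoly]

theorem pow_mul_Rres_comm (x y : A) : 125 ^ 6 * Rres x y = 125 ^ 6 * Rres y x := by
  nontriviality A
  have h := resultant_involutionPullback_comm (-11) 4 1 (monic_fiberPoly x) (monic_fiberPoly y)
  rwa [natDegree_fiberPoly, natDegree_fiberPoly, involutionPullback_fiberPoly,
    involutionPullback_fiberPoly, resultant_C_mul_right, resultant_C_mul_right,
    ← Rres_eq_resultant, ← Rres_eq_resultant] at h

end LevelFive

theorem modular_resultant_symmetric_general {A : Type*} [CommRing A] (x y : A) :
    Rres x y = Rres y x := by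
  have generic : Rres (MvPolynomial.X 0 : MvPolynomial (Fin 2) ℤ) (MvPolynomial.X 1) =
      Rres (MvPolynomial.X 1) (MvPolynomial.X 0) :=
    mul_left_cancel₀ (by norm_num) (pow_mul_Rres_comm _ _)
  simpa [map_Rres] using congrArg (MvPolynomial.aeval (R := ℤ) ![x, y]).toRingHom generic

/-- The symmetry `R(x,y) = R(y,x)` in `ℤ[x,y]`, which expresses the symmetry
`Φ₅(x,y) = Φ₅(y,x)` of the modular polynomial of level 5 via
`5¹⁵·Φ₅(x,y) = Res_z((z²+12z+16)³+x(z+11), (z²−228z+496)³+y(z+11)⁵)`. -/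
theorem modular_resultant_symmetric :
    Rres (MvPolynomial.X 0 : MvPolynomial (Fin 2) ℤ) (MvPolynomial.X 1) =
      Rres (MvPolynomial.X 1 : MvPolynomial (Fin 2) ℤ) (MvPolynomial.X 0) :=
  modular_resultant_symmetric_general _ _
end

section
/- Let ζ = exp(2πi/5) ∈ ℂ and, in PGL₂(ℂ), let S, T, U be the images of the matrices [[ζ,0],[0,1]], [[−(1+√5),2],[2,1+√5]], [[0,−1],[1,0]] respectively, and set A = S·T·S⁻². Let G₆₀ be the subgroup generated by S and T and G₁₀ the subgroup generated by S and U. Then G₁₀ has order 10, G₁₀ ⊆ G₆₀, and every element of G₆₀ can be written uniquely in the form h·Tⁱ·Aᵏ with h ∈ G₁₀, i ∈ {0,1}, k ∈ {0,1,2}; that is, the six elements Tⁱ·Aᵏ are a complete set of representatives for the right cosets of G₁₀ in G₆₀. -/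
/-!
The right cosets of `H = ⟨S, U⟩` in `⟨S, T⟩` are `H` and `H * T * S ^ j` for `j` modulo `5`. Label
them by the points `∞` and `j` of the projective line `ℙ¹(𝔽₅)`. Right multiplication by `S` then
acts as `x ↦ x + 1` and right multiplication by `T` as `x ↦ -1 / x`, reflecting the isomorphism of
the icosahedral group with `PSL₂(𝔽₅)`. Hence `A = S * T * S⁻²` acts as `x ↦ -1 / (x + 1) - 2`, and
the six products `T ^ i * A ^ k` carry `∞` to the six different points.

The labels belong to different cosets as soon as `T ∉ H`, because the action is transitive. The
matrices enter only through `S ≠ 1` and a few relations between `S`, `T` and `U`. These use that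
`√5` is the quadratic Gauss sum `1 + 2 * (ζ + ζ⁴)`, and so hold for a primitive fifth root of unity
in any domain.
-/

open Matrix Complex

/-- `PGL₂(ℂ)`: the quotient of `GL₂(ℂ)` by its center. -/
abbrev PGL2C : Type := GL (Fin 2) ℂ ⧸ Subgroup.center (GL (Fin 2) ℂ)

open QuotientGroup (rightRel rightRel_apply)
open scoped MatrixGroups

section RightTransversal

variable {G ι κ : Type*} [Group G] {H K : Subgroup G} {r : ι → G}

lemma rightRel_mul_right {x y : G} (a : G) (h : rightRel H x y) :
    rightRel H (x * a) (y * a) := by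
  simpa [rightRel_apply] using h

lemma rightRel_mul_left_of_mem {h : G} (hh : h ∈ H) (x : G) : rightRel H x (h * x) := by
  simpa [rightRel_apply] using hh

/-- The family `r` of elements of `K` represents each right coset of `H` in `K` exactly once.
The index type is kept, rather than passing to the range of `r`, so that the representatives come
with a labelling. -/
structure IsRightTransversal (H K : Subgroup G) (r : ι → G) : Prop where
  le : H ≤ K
  mem (i : ι) : r i ∈ K
  existsUnique (g : G) (hg : g ∈ K) : ∃! i, rightRel H (r i) g

lemma rightRel_iterate {f : ι → ι} {x : G} (hf : ∀ i, rightRel H (r (f i)) (r i * x)) (n : ℕ)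
    (i : ι) : rightRel H (r (f^[n] i)) (r i * x ^ n) := by
  induction n with
  | zero => simp
  | succ n ih =>
    rw [Function.iterate_succ_apply', pow_succ, ← mul_assoc]
    exact (rightRel H).trans' (hf _) (rightRel_mul_right x ih)

/-- A Schreier-type criterion: it suffices to follow the cosets under right multiplication by the
generators. Since `ι` is finite, each generator then permutes the cosets, so that their inverses
need no separate check. -/
theorem isRightTransversal_closure [Finite ι] {s : Set G} (hle : H ≤ Subgroup.closure s)
    (hmem : ∀ i, r i ∈ Subgroup.closure s) (hinj : ∀ i j, rightRel H (r i) (r j) → i = j)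
    (hone : ∃ i, rightRel H (r i) 1)
    (hmul : ∀ x ∈ s, ∀ i, ∃ j, rightRel H (r j) (r i * x)) :
    IsRightTransversal H (Subgroup.closure s) r := by
  refine ⟨hle, hmem, fun g hg ↦ existsUnique_of_exists_of_unique ?_ fun i j hi hj ↦
    hinj i j ((rightRel H).trans' hi ((rightRel H).symm' hj))⟩
  induction hg using Subgroup.closure_induction_right with
  | one => exact hone
  | mul_right g _ x hx ih =>
    obtain ⟨i, hi⟩ := ih
    obtain ⟨j, hj⟩ := hmul x hx i
    exact ⟨j, (rightRel H).trans' hj (rightRel_mul_right x hi)⟩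
  | mul_inv_cancel g _ x hx ih =>
    obtain ⟨i, hi⟩ := ih
    choose f hf using hmul x hx
    have hf_inj : Function.Injective f := fun a b hab ↦ hinj a b <| by
      have hb := hf b
      rw [← hab] at hb
      simpa using rightRel_mul_right x⁻¹ ((rightRel H).trans' ((rightRel H).symm' (hf a)) hb)
    obtain ⟨j, rfl⟩ := Finite.surjective_of_injective hf_inj i
    have hgx := rightRel_mul_right x⁻¹ ((rightRel H).trans' ((rightRel H).symm' (hf j)) hi)
    exact ⟨j, by simpa only [mul_inv_cancel_right] using hgx⟩

namespace IsRightTransversal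

lemma reindex (h : IsRightTransversal H K r) {f : κ → ι} (hf : f.Bijective) {r' : κ → G}
    (hr : ∀ k, rightRel H (r (f k)) (r' k)) : IsRightTransversal H K r' where
  le := h.le
  mem k := by
    simpa using mul_mem (h.le (rightRel_apply.1 (hr k))) (h.mem (f k))
  existsUnique g hg := by
    have hiff (k : κ) : rightRel H (r (f k)) g ↔ rightRel H (r' k) g :=
      ⟨(rightRel H).trans' ((rightRel H).symm' (hr k)), (rightRel H).trans' (hr k)⟩
    simpa only [← hiff] using (hf.existsUnique_iff).1 (h.existsUnique g hg)

lemma existsUnique_mul_eq (h : IsRightTransversal H K r) {g : G} (hg : g ∈ K) :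
    ∃! x : H × ι, (x.1 : G) * r x.2 = g := by
  obtain ⟨i, hi, huniq⟩ := h.existsUnique g hg
  refine ⟨(⟨g * (r i)⁻¹, rightRel_apply.1 hi⟩, i), inv_mul_cancel_right g (r i), ?_⟩
  rintro ⟨a, j⟩ rfl
  obtain rfl := huniq j (rightRel_mul_left_of_mem a.2 (r j))
  simp

lemma card_eq (h : IsRightTransversal H K r) : Nat.card K = Nat.card H * Nat.card ι := by
  rw [← Nat.card_prod]
  refine (Nat.card_eq_of_bijective
    (fun x : H × ι ↦ (⟨x.1 * r x.2, mul_mem (h.le x.1.2) (h.mem x.2)⟩ : K)) ?_).symm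
  rw [Function.bijective_iff_existsUnique]
  rintro ⟨g, hg⟩
  simpa only [Subtype.mk.injEq] using h.existsUnique_mul_eq hg

end IsRightTransversal

end RightTransversal

section Dihedral

variable {G : Type*} [Group G] {S U : G}

lemma isRightTransversal_zpowers (hUS : SemiconjBy U S S⁻¹) (hU : U * U = 1)
    (hmem : U ∉ Subgroup.zpowers S) :
    IsRightTransversal (Subgroup.zpowers S) (Subgroup.closure {S, U}) ![1, U] := by
  have hS_mem : S ∈ Subgroup.closure {S, U} := Subgroup.subset_closure (by simp)
  have hU_mem : U ∈ Subgroup.closure {S, U} := Subgroup.subset_closure (by simp)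
  have hU_inv : U⁻¹ = U := inv_eq_of_mul_eq_one_left hU
  refine isRightTransversal_closure (by simpa using hS_mem) ?_ ?_ ⟨0, by simp⟩ ?_
  · simpa [Fin.forall_fin_two] using hU_mem
  · simpa [Fin.forall_fin_two, rightRel_apply, hU_inv] using hmem
  · rintro x (rfl | rfl) i
    · refine ⟨i, ?_⟩
      fin_cases i
      · simp [rightRel_apply]
      · simp [rightRel_apply, hUS.eq]
    · refine ⟨1 - i, ?_⟩
      fin_cases i
      · simp
      · simp [hU]

lemma card_closure_pair_of_semiconjBy_inv (hUS : SemiconjBy U S S⁻¹) (hU : U * U = 1)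
    (hmem : U ∉ Subgroup.zpowers S) :
    Nat.card (Subgroup.closure {S, U}) = orderOf S * 2 := by
  simpa [Nat.card_zpowers] using (isRightTransversal_zpowers hUS hU hmem).card_eq

lemma closure_pair_le_normalizer_zpowers (hUS : SemiconjBy U S S⁻¹) :
    Subgroup.closure {S, U} ≤ Subgroup.normalizer (Subgroup.zpowers S : Set G) := by
  rw [Subgroup.closure_le, Set.pair_subset_iff]
  refine ⟨Subgroup.le_normalizer (Subgroup.mem_zpowers S), ?_⟩
  rw [SetLike.mem_coe, Subgroup.mem_normalizer_iff_map_conj_eq, MonoidHom.map_zpowers]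
  simp [hUS.eq]

end Dihedral

section ProjectiveLine

/-- The map `x ↦ x + 1` of the projective line `ℙ¹(𝔽₅)`, encoded as `Option (ZMod 5)` with `none`
as the point at infinity. It describes how `S` permutes the right cosets of `G₁₀` in `G₆₀`. -/
def moebiusS : Option (ZMod 5) → Option (ZMod 5) :=
  Option.map (· + 1)

/-- The map `x ↦ -1 / x` of `ℙ¹(𝔽₅)`, which describes how `T` permutes the right cosets. -/
def moebiusT : Option (ZMod 5) → Option (ZMod 5)
  | none => some 0
  | some x => if x = 0 then none else some (-x⁻¹)

/-- The map `x ↦ -1 / (x + 1) - 2` of `ℙ¹(𝔽₅)`, which describes how `A = S * T * S⁻²` permutes the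
right cosets. -/
def moebiusA (p : Option (ZMod 5)) : Option (ZMod 5) :=
  moebiusS^[3] (moebiusT (moebiusS p))

lemma moebiusT_iterate_moebiusS_eq_none_iff :
    ∀ (x : ZMod 5) (p : Option (ZMod 5)),
      moebiusT (moebiusS^[(-x).val] p) = none ↔ p = some x := by
  decide

lemma bijective_iterate_moebiusA_iterate_moebiusT :
    Function.Bijective fun x : Fin 2 × Fin 3 ↦ moebiusA^[x.2] (moebiusT^[x.1] none) := by
  decide +kernel

end ProjectiveLine

section PowFive

variable {G : Type*} [Group G] {S : G}

lemma inv_eq_pow_four (hS : S ^ 5 = 1) : S⁻¹ = S ^ 4 :=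
  inv_eq_of_mul_eq_one_left (by rw [← pow_succ, hS])

lemma inv_mul_inv_eq_pow_three (hS : S ^ 5 = 1) : S⁻¹ * S⁻¹ = S ^ 3 := by
  rw [inv_mul_eq_iff_eq_mul, ← pow_succ', inv_eq_pow_four hS]

end PowFive

/-- Generators of the icosahedral rotation group: `S` is a rotation of order five about a vertex
axis, `T` a half-turn about an edge axis, and `U` a half-turn that commutes with `T` and reverses
the axis of `S`. The relations between `S` and `T` are those of the `(2, 3, 5)` triangle group, and
`semiconj` says that `U = A * T * A⁻¹` for `A = S * T * S⁻²`. -/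
structure IsIcosahedralTriple {G : Type*} [Group G] (S T U : G) : Prop where
  ne_one : S ≠ 1
  pow_five : S ^ 5 = 1
  mul_self : T * T = 1
  pow_three : (T * S) ^ 3 = 1
  semiconj_inv : SemiconjBy U S S⁻¹
  commute : Commute T U
  semiconj : SemiconjBy (S * T * S⁻¹ * S⁻¹) T U

/-- Representatives of the right cosets of `⟨S, U⟩` in `⟨S, T⟩` for an icosahedral triple, labelled
by `ℙ¹(𝔽₅)` so that right multiplication by `S` and `T` acts on the labels by `moebiusS` and
`moebiusT`. -/
def projectiveRep {G : Type*} [Group G] (S T : G) : Option (ZMod 5) → G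
  | none => 1
  | some x => T * S ^ x.val

namespace IsIcosahedralTriple

variable {G : Type*} [Group G] {S T U : G}

lemma T_inv (h : IsIcosahedralTriple S T U) : T⁻¹ = T :=
  inv_eq_of_mul_eq_one_left h.mul_self

lemma U_mul_self (h : IsIcosahedralTriple S T U) : U * U = 1 := by
  rw [← mul_inv_eq_iff_eq_mul.2 h.semiconj.eq, ← MulAut.conj_apply, ← map_mul, h.mul_self, map_one]

lemma orderOf_eq_five (h : IsIcosahedralTriple S T U) : orderOf S = 5 :=
  have : Fact (Nat.Prime 5) := ⟨Nat.prime_five⟩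
  orderOf_eq_prime h.pow_five h.ne_one

lemma mul_self_ne_one (h : IsIcosahedralTriple S T U) : S * S ≠ 1 := fun hS ↦
  h.ne_one <| by simpa using pow_gcd_eq_one.2 ⟨(sq S).trans hS, h.pow_five⟩

lemma U_notMem_zpowers (h : IsIcosahedralTriple S T U) : U ∉ Subgroup.zpowers S := by
  rintro ⟨n, rfl⟩
  have hcomm : S⁻¹ = S := mul_right_cancel <|
    h.semiconj_inv.eq.symm.trans ((Commute.refl S).zpow_left n).eq
  exact h.mul_self_ne_one (mul_eq_one_iff_inv_eq.2 hcomm)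

lemma card_closure (h : IsIcosahedralTriple S T U) :
    Nat.card (Subgroup.closure {S, U}) = 10 := by
  rw [card_closure_pair_of_semiconjBy_inv h.semiconj_inv h.U_mul_self h.U_notMem_zpowers,
    h.orderOf_eq_five]

lemma T_mul_S_mul_T (h : IsIcosahedralTriple S T U) : T * S * T = S⁻¹ * (T * S⁻¹) := by
  have hprod : T * S * T * (S * T * S) = 1 := by
    simpa only [pow_succ, pow_zero, one_mul, mul_assoc] using h.pow_three
  simpa only [_root_.mul_inv_rev, h.T_inv, mul_assoc] using eq_inv_of_mul_eq_one_left hprod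

lemma T_mul_S_inv_mul_T (h : IsIcosahedralTriple S T U) : T * S⁻¹ * T = S * (T * S) := by
  simpa only [_root_.mul_inv_rev, inv_inv, h.T_inv, mul_assoc] using
    congrArg (·⁻¹) h.T_mul_S_mul_T

lemma T_mul_S_inv_sq_mul_T (h : IsIcosahedralTriple S T U) :
    T * (S⁻¹ * S⁻¹) * T = S⁻¹ * S⁻¹ * U * (T * (S⁻¹ * S⁻¹)) :=
  calc T * (S⁻¹ * S⁻¹) * T = S⁻¹ * (S * T * S⁻¹ * S⁻¹ * T) := by group
    _ = S⁻¹ * (U * S) * (T * (S⁻¹ * S⁻¹)) := by rw [h.semiconj.eq]; group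
    _ = S⁻¹ * S⁻¹ * U * (T * (S⁻¹ * S⁻¹)) := by rw [h.semiconj_inv.eq]; group

lemma T_mul_S_sq_mul_T (h : IsIcosahedralTriple S T U) :
    T * (S * S) * T = S * S * U * (T * (S * S)) := by
  have hU_inv : U⁻¹ = U := inv_eq_of_mul_eq_one_left h.U_mul_self
  calc T * (S * S) * T = (T * (S⁻¹ * S⁻¹) * T)⁻¹ := by
        simp only [_root_.mul_inv_rev, inv_inv, h.T_inv, mul_assoc]
    _ = S * S * (T * U) * (S * S) := by
        rw [h.T_mul_S_inv_sq_mul_T]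
        simp only [_root_.mul_inv_rev, inv_inv, h.T_inv, hU_inv, mul_assoc]
    _ = S * S * U * (T * (S * S)) := by rw [h.commute.eq]; group

/-- If `T` lay in `⟨S, U⟩`, it would normalize `⟨S⟩`; then `T * S * T = S⁻¹ * T * S⁻¹` would put
`T` into `⟨S⟩`. -/
lemma T_notMem_closure (h : IsIcosahedralTriple S T U) : T ∉ Subgroup.closure {S, U} := by
  intro hT
  have hS : S ∈ Subgroup.zpowers S := Subgroup.mem_zpowers S
  have hconj : T * S * T ∈ Subgroup.zpowers S := by
    simpa only [h.T_inv] using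
      (Subgroup.mem_normalizer_iff.1 (closure_pair_le_normalizer_zpowers h.semiconj_inv hT) S).1 hS
  rw [h.T_mul_S_mul_T, Subgroup.mul_mem_cancel_left _ (inv_mem hS),
    Subgroup.mul_mem_cancel_right _ (inv_mem hS)] at hconj
  obtain ⟨n, hn⟩ := hconj
  have hT5 : T ^ 5 = 1 := by
    rw [← hn, ← zpow_natCast, zpow_comm, zpow_natCast, h.pow_five, _root_.one_zpow]
  have hT1 : T = 1 := by
    simpa using pow_gcd_eq_one.2 ⟨(sq T).trans h.mul_self, hT5⟩
  have hS3 : S ^ 3 = 1 := by simpa only [hT1, one_mul] using h.pow_three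
  exact h.ne_one (by simpa using pow_gcd_eq_one.2 ⟨hS3, h.pow_five⟩)

lemma rightRel_moebiusS (h : IsIcosahedralTriple S T U) (p : Option (ZMod 5)) :
    rightRel (Subgroup.closure {S, U}) (projectiveRep S T (moebiusS p))
      (projectiveRep S T p * S) := by
  cases p with
  | none =>
    simpa [moebiusS, projectiveRep, rightRel_apply] using Subgroup.subset_closure (by simp)
  | some x =>
    have hpow : S ^ (x + 1).val = S ^ x.val * S := by
      rw [ZMod.val_add, ZMod.val_one'' (by decide), ← pow_eq_pow_mod _ h.pow_five, pow_succ]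
    simp [moebiusS, projectiveRep, hpow, mul_assoc]

lemma rightRel_moebiusT (h : IsIcosahedralTriple S T U) (p : Option (ZMod 5)) :
    rightRel (Subgroup.closure {S, U}) (projectiveRep S T (moebiusT p))
      (projectiveRep S T p * T) := by
  have hS : S ∈ Subgroup.closure {S, U} := Subgroup.subset_closure (by simp)
  have hU : U ∈ Subgroup.closure {S, U} := Subgroup.subset_closure (by simp)
  have of_eq {a : G} (ha : a ∈ Subgroup.closure {S, U}) {x y : ZMod 5}
      (hxy : moebiusT (some x) = some y) (heq : T * S ^ x.val * T = a * (T * S ^ y.val)) :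
      rightRel (Subgroup.closure {S, U}) (projectiveRep S T (moebiusT (some x)))
        (projectiveRep S T (some x) * T) := by
    rw [hxy, projectiveRep, projectiveRep, heq]
    exact rightRel_mul_left_of_mem ha _
  match p with
  | none => simp [moebiusT, projectiveRep]
  | some 0 => simp [moebiusT, projectiveRep, h.mul_self]
  | some 1 =>
    refine of_eq (inv_mem hS) (y := 4) (by decide +kernel) ?_
    change T * S ^ 1 * T = S⁻¹ * (T * S ^ 4)
    rw [pow_one, h.T_mul_S_mul_T, inv_eq_pow_four h.pow_five]
  | some 2 =>
    refine of_eq (mul_mem (mul_mem hS hS) hU) (y := 2) (by decide +kernel) ?_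
    change T * S ^ 2 * T = S * S * U * (T * S ^ 2)
    rw [sq, h.T_mul_S_sq_mul_T]
  | some 3 =>
    refine of_eq (mul_mem (mul_mem (inv_mem hS) (inv_mem hS)) hU) (y := 3) (by decide +kernel) ?_
    change T * S ^ 3 * T = S⁻¹ * S⁻¹ * U * (T * S ^ 3)
    rw [← inv_mul_inv_eq_pow_three h.pow_five, h.T_mul_S_inv_sq_mul_T]
  | some 4 =>
    refine of_eq hS (y := 1) (by decide +kernel) ?_
    change T * S ^ 4 * T = S * (T * S ^ 1)
    rw [← inv_eq_pow_four h.pow_five, h.T_mul_S_inv_mul_T, pow_one]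

lemma rightRel_moebiusA (h : IsIcosahedralTriple S T U) (p : Option (ZMod 5)) :
    rightRel (Subgroup.closure {S, U}) (projectiveRep S T (moebiusA p))
      (projectiveRep S T p * (S * T * S⁻¹ * S⁻¹)) := by
  have hST := (rightRel _).trans' (h.rightRel_moebiusT (moebiusS p))
    (rightRel_mul_right T (h.rightRel_moebiusS p))
  have hSTS := (rightRel _).trans' (rightRel_iterate h.rightRel_moebiusS 3 _)
    (rightRel_mul_right (S ^ 3) hST)
  simpa only [moebiusA, inv_mul_inv_eq_pow_three h.pow_five, mul_assoc] using hSTS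

lemma projectiveRep_mem_closure (p : Option (ZMod 5)) :
    projectiveRep S T p ∈ Subgroup.closure {S, T} := by
  cases p with
  | none => exact one_mem _
  | some x =>
    exact mul_mem (Subgroup.subset_closure (by simp))
      (pow_mem (Subgroup.subset_closure (by simp)) _)

lemma closure_le (h : IsIcosahedralTriple S T U) :
    Subgroup.closure {S, U} ≤ Subgroup.closure {S, T} := by
  have hS : S ∈ Subgroup.closure {S, T} := Subgroup.subset_closure (by simp)
  have hT : T ∈ Subgroup.closure {S, T} := Subgroup.subset_closure (by simp)
  have hA : S * T * S⁻¹ * S⁻¹ ∈ Subgroup.closure {S, T} :=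
    mul_mem (mul_mem (mul_mem hS hT) (inv_mem hS)) (inv_mem hS)
  have hU : U ∈ Subgroup.closure {S, T} := by
    rw [← mul_inv_eq_iff_eq_mul.2 h.semiconj.eq]
    exact mul_mem (mul_mem hA hT) (inv_mem hA)
  rw [Subgroup.closure_le, Set.pair_subset_iff]
  exact ⟨hS, hU⟩

lemma eq_none_of_rightRel_projectiveRep (h : IsIcosahedralTriple S T U) {p : Option (ZMod 5)}
    (hp : rightRel (Subgroup.closure {S, U}) 1 (projectiveRep S T p)) : p = none := by
  cases p with
  | none => rfl
  | some x =>
    rw [rightRel_apply, inv_one, mul_one] at hp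
    have hpow : S ^ x.val ∈ Subgroup.closure {S, U} :=
      pow_mem (Subgroup.subset_closure (by simp)) _
    exact absurd ((Subgroup.mul_mem_cancel_right _ hpow).1 hp) h.T_notMem_closure

/-- Since `⟨S, T⟩` acts transitively on the labels, it suffices that `∞` shares its coset with no
other label. -/
lemma eq_of_rightRel_projectiveRep (h : IsIcosahedralTriple S T U) {p q : Option (ZMod 5)}
    (hpq : rightRel (Subgroup.closure {S, U}) (projectiveRep S T p) (projectiveRep S T q)) :
    p = q := by
  cases p with
  | none => exact (h.eq_none_of_rightRel_projectiveRep hpq).symm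
  | some x =>
    have hmove (p) : rightRel (Subgroup.closure {S, U})
        (projectiveRep S T (moebiusT (moebiusS^[(-x).val] p)))
        (projectiveRep S T p * S ^ (-x).val * T) :=
      (rightRel _).trans' (h.rightRel_moebiusT _)
        (rightRel_mul_right T (rightRel_iterate h.rightRel_moebiusS _ p))
    have hmoved := (rightRel _).trans' ((rightRel _).trans' (hmove (some x))
      (rightRel_mul_right T (rightRel_mul_right _ hpq))) ((rightRel _).symm' (hmove q))
    rw [(moebiusT_iterate_moebiusS_eq_none_iff x _).2 rfl] at hmoved
    exact ((moebiusT_iterate_moebiusS_eq_none_iff x q).1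
      (h.eq_none_of_rightRel_projectiveRep hmoved)).symm

theorem isRightTransversal_projectiveRep (h : IsIcosahedralTriple S T U) :
    IsRightTransversal (Subgroup.closure {S, U}) (Subgroup.closure {S, T})
      (projectiveRep S T) := by
  refine isRightTransversal_closure h.closure_le projectiveRep_mem_closure
    (fun _ _ ↦ h.eq_of_rightRel_projectiveRep) ⟨none, (rightRel _).refl' 1⟩ ?_
  rintro x (rfl | rfl) p
  · exact ⟨_, h.rightRel_moebiusS p⟩
  · exact ⟨_, h.rightRel_moebiusT p⟩

theorem isRightTransversal_pow_mul_pow (h : IsIcosahedralTriple S T U) :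
    IsRightTransversal (Subgroup.closure {S, U}) (Subgroup.closure {S, T})
      fun x : Fin 2 × Fin 3 ↦ T ^ (x.1 : ℕ) * (S * T * S⁻¹ * S⁻¹) ^ (x.2 : ℕ) := by
  refine h.isRightTransversal_projectiveRep.reindex
    bijective_iterate_moebiusA_iterate_moebiusT fun x ↦ ?_
  have hT := rightRel_iterate h.rightRel_moebiusT x.1 none
  rw [projectiveRep, one_mul] at hT
  exact (rightRel _).trans' (rightRel_iterate h.rightRel_moebiusA x.2 _) (rightRel_mul_right _ hT)

end IsIcosahedralTriple

section ProjectiveGeneralLinear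

lemma projGenLinGroup_mk_eq_mk_of_eq_smul {n R : Type*} [Fintype n] [DecidableEq n] [CommRing R]
    {M N : GL n R} (c : R) (h : (M : Matrix n n R) = c • (N : Matrix n n R)) :
    ProjGenLinGroup.mk M = ProjGenLinGroup.mk N := by
  rw [← mul_inv_eq_one, ← map_inv, ← map_mul, ProjGenLinGroup.mk_eq_one,
    GeneralLinearGroup.mem_center_iff_val_mem_range_scalar]
  refine ⟨c, ?_⟩
  rw [Units.val_mul, h, smul_mul_assoc, ← Units.val_mul, mul_inv_cancel, Units.val_one,
    smul_one_eq_diagonal, scalar_apply]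

variable {R : Type*} [CommRing R] {ζ d : R} {MS MT MU : GL (Fin 2) R}

lemma projGenLinGroup_mk_diagonal_ne_one (hζ : ζ ≠ 1)
    (hMS : (MS : Matrix (Fin 2) (Fin 2) R) = !![ζ, 0; 0, 1]) : ProjGenLinGroup.mk MS ≠ 1 := by
  rw [Ne, ProjGenLinGroup.mk_eq_one, GeneralLinearGroup.mem_center_iff_val_mem_range_scalar, hMS]
  rintro ⟨c, hc⟩
  have h00 : c = ζ := by simpa using congrFun₂ hc 0 0
  have h11 : c = 1 := by simpa using congrFun₂ hc 1 1
  exact hζ (h00.symm.trans h11)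

lemma diagonal_pow_fin_two (ζ : R) (n : ℕ) :
    !![ζ, 0; 0, 1] ^ n = !![ζ ^ n, 0; 0, 1] := by
  induction n with
  | zero => simp [one_fin_two]
  | succ n ih =>
    rw [pow_succ, ih]
    simp [pow_succ]

lemma projGenLinGroup_mk_diagonal_pow_eq_one {n : ℕ} (hζ : ζ ^ n = 1)
    (hMS : (MS : Matrix (Fin 2) (Fin 2) R) = !![ζ, 0; 0, 1]) : ProjGenLinGroup.mk MS ^ n = 1 := by
  rw [← map_pow, ← map_one ProjGenLinGroup.mk]
  refine projGenLinGroup_mk_eq_mk_of_eq_smul 1 ?_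
  simp [hMS, diagonal_pow_fin_two, hζ, one_fin_two]

lemma semiconjBy_projGenLinGroup_mk_diagonal
    (hMS : (MS : Matrix (Fin 2) (Fin 2) R) = !![ζ, 0; 0, 1])
    (hMU : (MU : Matrix (Fin 2) (Fin 2) R) = !![0, -1; 1, 0]) :
    SemiconjBy (ProjGenLinGroup.mk MU) (ProjGenLinGroup.mk MS) (ProjGenLinGroup.mk MS)⁻¹ := by
  rw [SemiconjBy, eq_inv_mul_iff_mul_eq, ← mul_assoc, ← map_mul, ← map_mul]
  refine projGenLinGroup_mk_eq_mk_of_eq_smul ζ ?_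
  simp [hMS, hMU]

lemma commute_projGenLinGroup_mk
    (hMT : (MT : Matrix (Fin 2) (Fin 2) R) = !![-(1 + d), 2; 2, 1 + d])
    (hMU : (MU : Matrix (Fin 2) (Fin 2) R) = !![0, -1; 1, 0]) :
    Commute (ProjGenLinGroup.mk MT) (ProjGenLinGroup.mk MU) := by
  rw [Commute, SemiconjBy, ← map_mul, ← map_mul]
  refine projGenLinGroup_mk_eq_mk_of_eq_smul (-1) ?_
  simp [hMT, hMU]

lemma projGenLinGroup_mk_mul_self
    (hMT : (MT : Matrix (Fin 2) (Fin 2) R) = !![-(1 + d), 2; 2, 1 + d]) :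
    ProjGenLinGroup.mk MT * ProjGenLinGroup.mk MT = 1 := by
  rw [← map_mul, ← map_one ProjGenLinGroup.mk]
  refine projGenLinGroup_mk_eq_mk_of_eq_smul ((1 + d) ^ 2 + 4) ?_
  ext i j
  fin_cases i <;> fin_cases j <;> simp [hMT] <;> ring

lemma projGenLinGroup_mk_mul_pow_three (hζ : ζ ^ 4 + ζ ^ 3 + ζ ^ 2 + ζ + 1 = 0)
    (hMS : (MS : Matrix (Fin 2) (Fin 2) R) = !![ζ, 0; 0, 1])
    (hMT : (MT : Matrix (Fin 2) (Fin 2) R) =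
      !![-(1 + (1 + 2 * (ζ + ζ ^ 4))), 2; 2, 1 + (1 + 2 * (ζ + ζ ^ 4))]) :
    (ProjGenLinGroup.mk MT * ProjGenLinGroup.mk MS) ^ 3 = 1 := by
  rw [← map_mul, ← map_pow, ← map_one ProjGenLinGroup.mk]
  refine projGenLinGroup_mk_eq_mk_of_eq_smul (8 * (ζ ^ 2 - ζ ^ 4) ^ 3) ?_
  ext i j
  fin_cases i <;> fin_cases j <;> simp [hMT, hMS, pow_succ] <;> grind

lemma semiconjBy_projGenLinGroup_mk (hζ : ζ ^ 4 + ζ ^ 3 + ζ ^ 2 + ζ + 1 = 0)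
    (hMS : (MS : Matrix (Fin 2) (Fin 2) R) = !![ζ, 0; 0, 1])
    (hMT : (MT : Matrix (Fin 2) (Fin 2) R) =
      !![-(1 + (1 + 2 * (ζ + ζ ^ 4))), 2; 2, 1 + (1 + 2 * (ζ + ζ ^ 4))])
    (hMU : (MU : Matrix (Fin 2) (Fin 2) R) = !![0, -1; 1, 0]) :
    SemiconjBy (ProjGenLinGroup.mk MS * ProjGenLinGroup.mk MT * ProjGenLinGroup.mk MS ^ 3)
      (ProjGenLinGroup.mk MT) (ProjGenLinGroup.mk MU) := by
  simp only [SemiconjBy, ← map_mul, ← map_pow]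
  refine projGenLinGroup_mk_eq_mk_of_eq_smul (2 * (ζ ^ 4 - ζ)) ?_
  ext i j
  fin_cases i <;> fin_cases j <;> simp [hMS, diagonal_pow_fin_two, hMT, hMU] <;> grind

lemma geom_sum_five_eq_zero [IsDomain R] (hζ : IsPrimitiveRoot ζ 5) :
    ζ ^ 4 + ζ ^ 3 + ζ ^ 2 + ζ + 1 = 0 := by
  have := hζ.geom_sum_eq_zero (by decide)
  simp only [Finset.sum_range_succ, Finset.sum_range_zero] at this
  linear_combination this

theorem isIcosahedralTriple_mk [IsDomain R] (hζ : IsPrimitiveRoot ζ 5)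
    (hd : d = 1 + 2 * (ζ + ζ ^ 4))
    (hMS : (MS : Matrix (Fin 2) (Fin 2) R) = !![ζ, 0; 0, 1])
    (hMT : (MT : Matrix (Fin 2) (Fin 2) R) = !![-(1 + d), 2; 2, 1 + d])
    (hMU : (MU : Matrix (Fin 2) (Fin 2) R) = !![0, -1; 1, 0]) :
    IsIcosahedralTriple (ProjGenLinGroup.mk MS) (ProjGenLinGroup.mk MT)
      (ProjGenLinGroup.mk MU) := by
  subst hd
  have hsum := geom_sum_five_eq_zero hζ
  have hpow := projGenLinGroup_mk_diagonal_pow_eq_one hζ.pow_eq_one hMS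
  exact
    { ne_one := projGenLinGroup_mk_diagonal_ne_one (hζ.ne_one (by decide)) hMS
      pow_five := hpow
      mul_self := projGenLinGroup_mk_mul_self hMT
      pow_three := projGenLinGroup_mk_mul_pow_three hsum hMS hMT
      semiconj_inv := semiconjBy_projGenLinGroup_mk_diagonal hMS hMU
      commute := commute_projGenLinGroup_mk hMT hMU
      semiconj := by
        rw [mul_assoc _ (ProjGenLinGroup.mk MS)⁻¹, inv_mul_inv_eq_pow_three hpow]
        exact semiconjBy_projGenLinGroup_mk hsum hMS hMT hMU }

theorem right_coset_representatives_G10_in_G60_general [IsDomain R] (hζ : IsPrimitiveRoot ζ 5)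
    (hd : d = 1 + 2 * (ζ + ζ ^ 4))
    (hMS : (MS : Matrix (Fin 2) (Fin 2) R) = !![ζ, 0; 0, 1])
    (hMT : (MT : Matrix (Fin 2) (Fin 2) R) = !![-(1 + d), 2; 2, 1 + d])
    (hMU : (MU : Matrix (Fin 2) (Fin 2) R) = !![0, -1; 1, 0])
    {S T U A : PGL(2, R)}
    (hS : S = ProjGenLinGroup.mk MS) (hT : T = ProjGenLinGroup.mk MT)
    (hU : U = ProjGenLinGroup.mk MU) (hA : A = S * T * S⁻¹ * S⁻¹) {G60 G10 : Subgroup PGL(2, R)}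
    (hG60 : G60 = Subgroup.closure {S, T}) (hG10 : G10 = Subgroup.closure {S, U}) :
    Nat.card G10 = 10 ∧
    G10 ≤ G60 ∧
    ∀ g ∈ G60, ∃! x : G10 × Fin 2 × Fin 3,
      (x.1 : PGL(2, R)) * T ^ (x.2.1 : ℕ) * A ^ (x.2.2 : ℕ) = g := by
  subst hS hT hU hA hG60 hG10
  have h := isIcosahedralTriple_mk hζ hd hMS hMT hMU
  refine ⟨h.card_closure, h.closure_le, fun g hg ↦ ?_⟩
  simpa only [mul_assoc] using h.isRightTransversal_pow_mul_pow.existsUnique_mul_eq hg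

end ProjectiveGeneralLinear

lemma sqrt_five_eq_one_add_two_mul_exp :
    (Real.sqrt 5 : ℂ) = 1 + 2 * (Complex.exp (2 * Real.pi * Complex.I / 5) +
      Complex.exp (2 * Real.pi * Complex.I / 5) ^ 4) := by
  have hcos : Real.cos (2 * (Real.pi / 5)) = (Real.sqrt 5 - 1) / 4 := by
    rw [Real.cos_two_mul, Real.cos_pi_div_five]
    linear_combination (1 / 8) * Real.sq_sqrt (show (0 : ℝ) ≤ 5 by norm_num)
  have hexp : Complex.exp (2 * Real.pi * Complex.I / 5) ^ 4 =
      Complex.exp (-(2 * (Real.pi / 5) : ℂ) * Complex.I) := by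
    rw [← Complex.exp_nat_mul, ← Complex.exp_periodic.sub_eq]
    congr 1
    push_cast
    ring
  have htwo_cos : (2 : ℂ) * Real.cos (2 * (Real.pi / 5)) =
      Complex.exp (2 * Real.pi * Complex.I / 5) +
        Complex.exp (2 * Real.pi * Complex.I / 5) ^ 4 := by
    rw [hexp, Complex.ofReal_cos, Complex.two_cos]
    push_cast
    ring_nf
  rw [← htwo_cos, hcos]
  push_cast
  ring

/-- Lemma 6.2(d) of Morton's paper: with `S`, `T`, `U` the images in `PGL₂(ℂ)` of the
matrices `[[ζ,0],[0,1]]`, `[[−(1+√5),2],[2,1+√5]]`, `[[0,−1],[1,0]]` (`ζ = e^{2πi/5}`)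
and `A = S·T·S⁻²`, the subgroup `G₁₀ = ⟨S,U⟩` has order 10, is contained in
`G₆₀ = ⟨S,T⟩`, and the six elements `Tⁱ·Aᵏ` (`0 ≤ i ≤ 1`, `0 ≤ k ≤ 2`) form a complete
set of representatives of the right cosets of `G₁₀` in `G₆₀`: every element of `G₆₀` is
uniquely of the form `h·Tⁱ·Aᵏ` with `h ∈ G₁₀`. -/
theorem right_coset_representatives_G10_in_G60
    (ζ : ℂ) (hζ : ζ = Complex.exp (2 * Real.pi * Complex.I / 5))
    (MS MT MU : GL (Fin 2) ℂ)
    (hMS : (MS : Matrix (Fin 2) (Fin 2) ℂ) = !![ζ, 0; 0, 1])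
    (hMT : (MT : Matrix (Fin 2) (Fin 2) ℂ) =
      !![-(1 + (Real.sqrt 5 : ℂ)), 2; 2, 1 + (Real.sqrt 5 : ℂ)])
    (hMU : (MU : Matrix (Fin 2) (Fin 2) ℂ) = !![0, -1; 1, 0])
    (S T U : PGL2C) (hS : S = QuotientGroup.mk MS) (hT : T = QuotientGroup.mk MT)
    (hU : U = QuotientGroup.mk MU)
    (A : PGL2C) (hA : A = S * T * S⁻¹ * S⁻¹)
    (G60 G10 : Subgroup PGL2C)
    (hG60 : G60 = Subgroup.closure {S, T}) (hG10 : G10 = Subgroup.closure {S, U}) :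
    Nat.card G10 = 10 ∧
    G10 ≤ G60 ∧
    ∀ g ∈ G60, ∃! x : G10 × Fin 2 × Fin 3,
      (x.1 : PGL2C) * T ^ (x.2.1 : ℕ) * A ^ (x.2.2 : ℕ) = g := by
  subst hζ
  exact right_coset_representatives_G10_in_G60_general (by
    exact_mod_cast Complex.isPrimitiveRoot_exp 5 (by decide)) sqrt_five_eq_one_add_two_mul_exp
    hMS hMT hMU hS hT hU hA hG60 hG10
end
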